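/- arXiv:1402.0440 — 2 statements merged into one kernel-verified Lean document; each statement's English description precedes it below -/
import Mathlib

section
/- Let a, b be real numbers with 0 < a < b < 1/2, and let (a_n)_{n≥1}, (b_n)_{n≥1} be sequences of rationals such that (a_n) is strictly increasing with limit a, (b_n) is strictly decreasing with limit b, and 0 < a_n < a < b < b_n < 1/2 for all n. Identify ℂ with ℝ × ℝ, let Q = [−1,1] × [−1,1], and for each n ≥ 1 set S_n = (−b_n, b_n) × (3⁻ⁿ, 3¹⁻ⁿ], L_n = [−b_n, a_n] × [8·3⁻ⁿ⁻¹, 3¹⁻ⁿ], R_n = [−a_n, b_n] × [5·3⁻ⁿ⁻¹, 2·3⁻ⁿ]. Let Ω = ((ℝ × ℝ) \ Q) ∪ ⋃_{n≥1} (S_n \ (L_n ∪ R_n)), and for k ≥ 1 let Ω_k = ((ℝ × ℝ) \ Q) ∪ ⋃_{1≤n≤k} (S_n \ (L_n ∪ R_n)). Then for every k ≥ 1 the Hausdorff distance between the boundary ∂Ω_k and the boundary ∂Ω is at most 3⁻ᵏ. -/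
/-!
Write `t = 3⁻ᵏ` and `B = b_{k+1}`. The sets `Ω` and `Ω_k` differ only inside the closed box
`[-B, B] × [0, t]`, so outside it their boundaries coincide. Inside it, the boundary of `Ω_k` is
the top edge of the box, which is within `t` of every point of the box. Conversely, a point of the
top edge lies on the boundary of `Ω` if it belongs to the left bar `L_{k+1}`; otherwise the point
`t / 3` below it is on the top edge of the right bar `R_{k+1}`, hence on the boundary of `Ω`.
-/

open Set

section General

variable {X α β : Type*}

theorem frontier_sdiff_eq_of_sdiff_eq [TopologicalSpace X] {s t D : Set X} (hD : IsClosed D)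
    (h : s \ D = t \ D) : frontier s \ D = frontier t \ D := by
  simp only [sdiff_eq] at h ⊢
  rw [← frontier_inter_open_inter hD.isOpen_compl, h, frontier_inter_open_inter hD.isOpen_compl]

theorem hausdorffDist_frontier_le_of_sdiff_eq [PseudoMetricSpace X] {s t D : Set X} {r : ℝ}
    (hr : 0 ≤ r) (hD : IsClosed D) (h : s \ D = t \ D)
    (hs : ∀ x ∈ frontier s ∩ D, ∃ y ∈ frontier t, dist x y ≤ r)
    (ht : ∀ x ∈ frontier t ∩ D, ∃ y ∈ frontier s, dist x y ≤ r) :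
    Metric.hausdorffDist (frontier s) (frontier t) ≤ r := by
  have hfrontier := frontier_sdiff_eq_of_sdiff_eq hD h
  refine Metric.hausdorffDist_le_of_mem_dist hr (fun x hx => ?_) (fun x hx => ?_)
  · by_cases hxD : x ∈ D
    · exact hs x ⟨hx, hxD⟩
    · exact ⟨x, (hfrontier.subset ⟨hx, hxD⟩).1, by rwa [dist_self]⟩
  · by_cases hxD : x ∈ D
    · exact ht x ⟨hx, hxD⟩
    · exact ⟨x, (hfrontier.superset ⟨hx, hxD⟩).1, by rwa [dist_self]⟩

theorem mem_frontier_of_mem_closure_of_notMem [TopologicalSpace X] {s : Set X} {x : X}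
    (hx : x ∈ closure s) (hxs : x ∉ s) : x ∈ frontier s :=
  ⟨hx, notMem_subset interior_subset hxs⟩

theorem Icc_prod_Icc_subset_closure
    [LinearOrder α] [TopologicalSpace α] [OrderTopology α] [DenselyOrdered α]
    [LinearOrder β] [TopologicalSpace β] [OrderTopology β] [DenselyOrdered β]
    {s : Set (α × β)} {x₀ x₁ : α} {y₀ y₁ : β} (hx : x₀ < x₁) (hy : y₀ < y₁)
    (h : Ioo x₀ x₁ ×ˢ Ioo y₀ y₁ ⊆ s) : Icc x₀ x₁ ×ˢ Icc y₀ y₁ ⊆ closure s := by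
  rw [← closure_Ioo hx.ne, ← closure_Ioo hy.ne, ← closure_prod_eq]
  exact closure_mono h

end General

section Serpentine

/-- The square `Q` whose exterior belongs to every domain considered here. -/
def outerSquare : Set (ℝ × ℝ) := Icc (-1) 1 ×ˢ Icc (-1) 1

/-- The strip `S_n`, of half-width `b n`. -/
def strip (b : ℕ → ℝ) (n : ℕ) : Set (ℝ × ℝ) :=
  Ioo (-b n) (b n) ×ˢ Ioc ((3 : ℝ) ^ (-(n : ℤ))) ((3 : ℝ) ^ (1 - (n : ℤ)))

/-- The bar `L_n`, attached to the left side of the strip `S_n`. -/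
def leftBar (a b : ℕ → ℝ) (n : ℕ) : Set (ℝ × ℝ) :=
  Icc (-b n) (a n) ×ˢ Icc (8 * (3 : ℝ) ^ (-((n : ℤ) + 1))) ((3 : ℝ) ^ (1 - (n : ℤ)))

/-- The bar `R_n`, attached to the right side of the strip `S_n`. -/
def rightBar (a b : ℕ → ℝ) (n : ℕ) : Set (ℝ × ℝ) :=
  Icc (-a n) (b n) ×ˢ Icc (5 * (3 : ℝ) ^ (-((n : ℤ) + 1))) (2 * (3 : ℝ) ^ (-(n : ℤ)))

/-- The part of the strip `S_n` left free by the bars `L_n` and `R_n`. -/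
def passage (a b : ℕ → ℝ) (n : ℕ) : Set (ℝ × ℝ) :=
  strip b n \ (leftBar a b n ∪ rightBar a b n)

/-- The exterior of the square together with the passages of index in `I`. The domain `Ω` is the
case `I = Ici 1`, and its truncation `Ω_k` is the case `I = Icc 1 k`. -/
def serpentine (a b : ℕ → ℝ) (I : Set ℕ) : Set (ℝ × ℝ) :=
  outerSquareᶜ ∪ ⋃ n ∈ I, passage a b n

/-- The closed box `[-b_{k+1}, b_{k+1}] × [0, 3⁻ᵏ]`, which contains the passages of index greater
than `k` when `b` is antitone. -/
def remainderBox (b : ℕ → ℝ) (k : ℕ) : Set (ℝ × ℝ) :=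
  Icc (-b (k + 1)) (b (k + 1)) ×ˢ Icc 0 ((3 : ℝ) ^ (-(k : ℤ)))

variable {a b : ℕ → ℝ} {I J : Set ℕ} {k n : ℕ} {p : ℝ × ℝ} {x : ℝ}

theorem three_zpow_one_sub (n : ℕ) : (3 : ℝ) ^ (1 - (n : ℤ)) = 3 * (3 : ℝ) ^ (-(n : ℤ)) := by
  rw [sub_eq_add_neg, zpow_add₀ three_ne_zero, zpow_one]

theorem three_zpow_neg_add_one (n : ℕ) :
    (3 : ℝ) ^ (-((n : ℤ) + 1)) = (3 : ℝ) ^ (-(n : ℤ)) / 3 := by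
  rw [neg_add, zpow_add₀ three_ne_zero, zpow_neg_one, div_eq_mul_inv]

theorem three_zpow_neg_succ (n : ℕ) :
    (3 : ℝ) ^ (-((n + 1 : ℕ) : ℤ)) = (3 : ℝ) ^ (-(n : ℤ)) / 3 := by
  rw [Nat.cast_succ, three_zpow_neg_add_one]

theorem snd_mem_Ioc_of_mem_leftBar_union_rightBar (hp : p ∈ leftBar a b n ∪ rightBar a b n) :
    p.2 ∈ Ioc ((3 : ℝ) ^ (-(n : ℤ))) ((3 : ℝ) ^ (1 - (n : ℤ))) := by
  have hpos : (0 : ℝ) < 3 ^ (-(n : ℤ)) := by positivity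
  simp only [leftBar, rightBar, mem_union, mem_prod, mem_Icc, three_zpow_one_sub,
    three_zpow_neg_add_one] at hp
  rw [three_zpow_one_sub]
  rcases hp with ⟨-, hlo, hhi⟩ | ⟨-, hlo, hhi⟩ <;> constructor <;> linarith

theorem eq_of_mem_Ioc_three_zpow {m n : ℕ} {y : ℝ}
    (hm : y ∈ Ioc ((3 : ℝ) ^ (-(m : ℤ))) ((3 : ℝ) ^ (1 - (m : ℤ))))
    (hn : y ∈ Ioc ((3 : ℝ) ^ (-(n : ℤ))) ((3 : ℝ) ^ (1 - (n : ℤ)))) : m = n := by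
  have hnm := (zpow_lt_zpow_iff_right₀ (by norm_num)).1 (hm.1.trans_le hn.2)
  have hmn := (zpow_lt_zpow_iff_right₀ (by norm_num)).1 (hn.1.trans_le hm.2)
  lia

theorem bottom_subset_closure_passage (hb : 0 < b n) :
    Icc (-b n) (b n) ×ˢ {(3 : ℝ) ^ (-(n : ℤ))} ⊆ closure (passage a b n) := by
  have hpos : (0 : ℝ) < 3 ^ (-(n : ℤ)) := by positivity
  set h := (3 : ℝ) ^ (-(n : ℤ)) with h_def
  have hcorridor : Ioo (-b n) (b n) ×ˢ Ioo h (5 / 3 * h) ⊆ passage a b n := by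
    rintro p ⟨hx, hlo, hhi⟩
    simp only [passage, strip, leftBar, rightBar, three_zpow_one_sub, three_zpow_neg_add_one,
      ← h_def]
    refine ⟨⟨hx, hlo, by linarith⟩, ?_⟩
    rintro (⟨-, hlo', -⟩ | ⟨-, hlo', -⟩) <;> linarith
  rintro ⟨x, _⟩ ⟨hx, rfl⟩
  exact Icc_prod_Icc_subset_closure (by linarith) (by linarith) hcorridor
    ⟨hx, left_mem_Icc.2 (by linarith)⟩

theorem rightBar_top_subset_closure_passage (hb : 0 < b n) :
    Icc (-b n) (b n) ×ˢ {2 * (3 : ℝ) ^ (-(n : ℤ))} ⊆ closure (passage a b n) := by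
  have hpos : (0 : ℝ) < 3 ^ (-(n : ℤ)) := by positivity
  set h := (3 : ℝ) ^ (-(n : ℤ)) with h_def
  have hcorridor : Ioo (-b n) (b n) ×ˢ Ioo (2 * h) (8 / 3 * h) ⊆ passage a b n := by
    rintro p ⟨hx, hlo, hhi⟩
    simp only [passage, strip, leftBar, rightBar, three_zpow_one_sub, three_zpow_neg_add_one,
      ← h_def]
    refine ⟨⟨hx, by linarith, by linarith⟩, ?_⟩
    rintro (⟨-, hlo', -⟩ | ⟨-, -, hhi'⟩) <;> linarith
  rintro ⟨x, _⟩ ⟨hx, rfl⟩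
  exact Icc_prod_Icc_subset_closure (by linarith) (by linarith) hcorridor
    ⟨hx, left_mem_Icc.2 (by linarith)⟩

theorem mem_serpentine :
    p ∈ serpentine a b I ↔ p ∉ outerSquare ∨ ∃ n ∈ I, p ∈ passage a b n := by
  simp only [serpentine, mem_union, mem_compl_iff, mem_iUnion, exists_prop]

theorem serpentine_mono (h : I ⊆ J) : serpentine a b I ⊆ serpentine a b J :=
  union_subset_union_right _ (biUnion_mono h fun _ _ => Subset.rfl)

theorem passage_subset_serpentine (hn : n ∈ I) : passage a b n ⊆ serpentine a b I :=
  (subset_biUnion_of_mem hn).trans subset_union_right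

theorem notMem_serpentine_of_mem_bar (hpQ : p ∈ outerSquare)
    (hp : p ∈ leftBar a b n ∪ rightBar a b n) : p ∉ serpentine a b I := by
  rw [mem_serpentine]
  rintro (hpQ' | ⟨m, -, hpm⟩)
  · exact hpQ' hpQ
  · obtain rfl :=
      eq_of_mem_Ioc_three_zpow hpm.1.2 (snd_mem_Ioc_of_mem_leftBar_union_rightBar hp)
    exact hpm.2 hp

theorem notMem_serpentine_Icc_of_snd_le (hpQ : p ∈ outerSquare)
    (hp : p.2 ≤ (3 : ℝ) ^ (-(k : ℤ))) : p ∉ serpentine a b (Icc 1 k) := by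
  rw [mem_serpentine]
  rintro (hpQ' | ⟨n, hn, hpn⟩)
  · exact hpQ' hpQ
  · have hkn := (zpow_lt_zpow_iff_right₀ (by norm_num)).1 (hpn.1.2.1.trans_le hp)
    have := hn.2
    lia

theorem isClosed_remainderBox : IsClosed (remainderBox b k) :=
  isClosed_Icc.prod isClosed_Icc

theorem remainderBox_subset_outerSquare (hb : b (k + 1) ≤ 1) :
    remainderBox b k ⊆ outerSquare :=
  prod_mono (Icc_subset_Icc (by linarith) hb)
    (Icc_subset_Icc (by norm_num) (zpow_le_one_of_nonpos₀ (by norm_num) (by lia)))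

theorem strip_subset_remainderBox (hb : AntitoneOn b (Ici 1)) (hkn : k < n) :
    strip b n ⊆ remainderBox b k := by
  have hbn : b n ≤ b (k + 1) := hb (mem_Ici.2 (by lia)) (mem_Ici.2 (by lia)) hkn
  have hheight : (3 : ℝ) ^ (1 - (n : ℤ)) ≤ 3 ^ (-(k : ℤ)) :=
    zpow_le_zpow_right₀ (by norm_num) (by lia)
  exact prod_mono (Ioo_subset_Icc_self.trans (Icc_subset_Icc (neg_le_neg hbn) hbn))
    (Ioc_subset_Icc_self.trans (Icc_subset_Icc (by positivity) hheight))

theorem serpentine_sdiff_remainderBox (hb : AntitoneOn b (Ici 1)) :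
    serpentine a b (Icc 1 k) \ remainderBox b k =
      serpentine a b (Ici 1) \ remainderBox b k := by
  refine (sdiff_subset_sdiff_left (serpentine_mono Icc_subset_Ici_self)).antisymm ?_
  rintro p ⟨hp, hpD⟩
  refine ⟨?_, hpD⟩
  rw [mem_serpentine] at hp ⊢
  refine hp.imp_right fun ⟨n, hn, hpn⟩ => ⟨n, ⟨hn, ?_⟩, hpn⟩
  by_contra! hkn
  exact hpD (strip_subset_remainderBox hb hkn hpn.1)

theorem frontier_serpentine_Icc_inter_remainderBox_subset (hb : b (k + 1) < 1) :
    frontier (serpentine a b (Icc 1 k)) ∩ remainderBox b k ⊆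
      Icc (-b (k + 1)) (b (k + 1)) ×ˢ {(3 : ℝ) ^ (-(k : ℤ))} := by
  have hle : (3 : ℝ) ^ (-(k : ℤ)) ≤ 1 := zpow_le_one_of_nonpos₀ (by norm_num) (by lia)
  have hdisj : Disjoint (serpentine a b (Icc 1 k)) (Ioo (-1) 1 ×ˢ Ioo (-1) (3 ^ (-(k : ℤ)))) :=
    disjoint_right.2 fun p ⟨hx, hy⟩ => notMem_serpentine_Icc_of_snd_le
      ⟨Ioo_subset_Icc_self hx, hy.1.le, hy.2.le.trans hle⟩ hy.2.le
  rintro ⟨x, y⟩ ⟨hp, hx, hy⟩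
  refine ⟨hx, hy.2.eq_or_lt.resolve_right fun hlt => ?_⟩
  exact disjoint_left.1 (hdisj.frontier_left (isOpen_Ioo.prod isOpen_Ioo)) hp
    ⟨⟨by linarith [hx.1], hx.2.trans_lt hb⟩, by linarith [hy.1], hlt⟩

theorem remainderBox_top_subset_closure_serpentine (hk : 1 ≤ k)
    (hbk : b (k + 1) ≤ b k) (hb0 : 0 < b k) :
    Icc (-b (k + 1)) (b (k + 1)) ×ˢ {(3 : ℝ) ^ (-(k : ℤ))} ⊆
      closure (serpentine a b (Icc 1 k)) :=
  calc Icc (-b (k + 1)) (b (k + 1)) ×ˢ {(3 : ℝ) ^ (-(k : ℤ))}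
      ⊆ Icc (-b k) (b k) ×ˢ {(3 : ℝ) ^ (-(k : ℤ))} :=
        prod_mono_left (Icc_subset_Icc (neg_le_neg hbk) hbk)
    _ ⊆ closure (passage a b k) := bottom_subset_closure_passage hb0
    _ ⊆ closure (serpentine a b (Icc 1 k)) :=
        closure_mono (passage_subset_serpentine ⟨hk, le_rfl⟩)

theorem remainderBox_top_subset_frontier_serpentine_Icc (hk : 1 ≤ k)
    (hbk : b (k + 1) ≤ b k) (hb0 : 0 < b k) (hb1 : b (k + 1) ≤ 1) :
    Icc (-b (k + 1)) (b (k + 1)) ×ˢ {(3 : ℝ) ^ (-(k : ℤ))} ⊆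
      frontier (serpentine a b (Icc 1 k)) := by
  rintro ⟨x, _⟩ ⟨hx, rfl⟩
  have hpQ : (x, (3 : ℝ) ^ (-(k : ℤ))) ∈ outerSquare :=
    remainderBox_subset_outerSquare hb1 ⟨hx, right_mem_Icc.2 (by positivity)⟩
  exact mem_frontier_of_mem_closure_of_notMem
    (remainderBox_top_subset_closure_serpentine hk hbk hb0 ⟨hx, rfl⟩)
    (notMem_serpentine_Icc_of_snd_le hpQ le_rfl)

theorem remainderBox_top_mem_frontier_serpentine_of_le (hk : 1 ≤ k) (hI : Icc 1 k ⊆ I)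
    (hbk : b (k + 1) ≤ b k) (hb0 : 0 < b k) (hb1 : b (k + 1) ≤ 1)
    (hx : x ∈ Icc (-b (k + 1)) (b (k + 1))) (hxa : x ≤ a (k + 1)) :
    (x, (3 : ℝ) ^ (-(k : ℤ))) ∈ frontier (serpentine a b I) := by
  have hpos : (0 : ℝ) < 3 ^ (-(k : ℤ)) := by positivity
  have hpQ : (x, (3 : ℝ) ^ (-(k : ℤ))) ∈ outerSquare :=
    remainderBox_subset_outerSquare hb1 ⟨hx, right_mem_Icc.2 hpos.le⟩
  have hpL : (x, (3 : ℝ) ^ (-(k : ℤ))) ∈ leftBar a b (k + 1) := by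
    rw [leftBar, three_zpow_one_sub, three_zpow_neg_add_one, three_zpow_neg_succ]
    exact ⟨⟨hx.1, hxa⟩, by linarith, by linarith⟩
  exact mem_frontier_of_mem_closure_of_notMem
    (closure_mono (serpentine_mono hI)
      (remainderBox_top_subset_closure_serpentine hk hbk hb0 ⟨hx, rfl⟩))
    (notMem_serpentine_of_mem_bar hpQ (.inl hpL))

theorem rightBar_top_mem_frontier_serpentine (hI : k + 1 ∈ I)
    (hb0 : 0 < b (k + 1)) (hb1 : b (k + 1) ≤ 1)
    (hx : x ∈ Icc (-b (k + 1)) (b (k + 1))) (hxa : -a (k + 1) ≤ x) :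
    (x, 2 * (3 : ℝ) ^ (-((k + 1 : ℕ) : ℤ))) ∈ frontier (serpentine a b I) := by
  have hpos : (0 : ℝ) < 3 ^ (-((k + 1 : ℕ) : ℤ)) := by positivity
  have hle : 2 * (3 : ℝ) ^ (-((k + 1 : ℕ) : ℤ)) ≤ 3 ^ (-(k : ℤ)) := by
    linarith [three_zpow_neg_succ k]
  have hpQ : (x, 2 * (3 : ℝ) ^ (-((k + 1 : ℕ) : ℤ))) ∈ outerSquare :=
    remainderBox_subset_outerSquare hb1 ⟨hx, by positivity, hle⟩
  have hpR : (x, 2 * (3 : ℝ) ^ (-((k + 1 : ℕ) : ℤ))) ∈ rightBar a b (k + 1) := by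
    rw [rightBar, three_zpow_neg_add_one]
    exact ⟨⟨hxa, hx.2⟩, by linarith, le_rfl⟩
  exact mem_frontier_of_mem_closure_of_notMem
    (closure_mono (passage_subset_serpentine hI)
      (rightBar_top_subset_closure_passage hb0 ⟨hx, rfl⟩))
    (notMem_serpentine_of_mem_bar hpQ (.inr hpR))

theorem exists_mem_frontier_serpentine_dist_le (hk : 1 ≤ k)
    (hI : Icc 1 (k + 1) ⊆ I) (ha : 0 ≤ a (k + 1))
    (hbk : b (k + 1) ≤ b k) (hb0 : 0 < b (k + 1)) (hb1 : b (k + 1) ≤ 1)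
    (hx : x ∈ Icc (-b (k + 1)) (b (k + 1))) :
    ∃ q ∈ frontier (serpentine a b I),
      dist (x, (3 : ℝ) ^ (-(k : ℤ))) q ≤ (3 : ℝ) ^ (-(k : ℤ)) := by
  have hpos : (0 : ℝ) < 3 ^ (-(k : ℤ)) := by positivity
  rcases le_or_gt x (a (k + 1)) with hxa | hxa
  · have hIk : Icc 1 k ⊆ I := (Icc_subset_Icc_right k.le_succ).trans hI
    have hmem :=
      remainderBox_top_mem_frontier_serpentine_of_le hk hIk hbk (hb0.trans_le hbk) hb1 hx hxa
    exact ⟨_, hmem, by rw [dist_self]; exact hpos.le⟩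
  · have hkI : k + 1 ∈ I := hI (right_mem_Icc.2 k.succ_pos)
    refine ⟨_, rightBar_top_mem_frontier_serpentine hkI hb0 hb1 hx (by linarith), ?_⟩
    rw [dist_prod_same_left, three_zpow_neg_succ, Real.dist_eq, abs_le]
    constructor <;> linarith

theorem frontier_approx_hausdorff_general (ha : ∀ n, 1 ≤ n → 0 ≤ a n)
    (hb : AntitoneOn b (Ici 1)) (hb0 : ∀ n, 1 ≤ n → 0 < b n) (hb1 : ∀ n, 1 ≤ n → b n < 1)
    (hk : 1 ≤ k) :
    Metric.hausdorffDist (frontier (serpentine a b (Icc 1 k)))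
      (frontier (serpentine a b (Ici 1))) ≤ (3 : ℝ) ^ (-(k : ℤ)) := by
  have hk' : 1 ≤ k + 1 := k.succ_pos
  have hbk : b (k + 1) ≤ b k := hb hk hk' k.le_succ
  have hpos : (0 : ℝ) ≤ 3 ^ (-(k : ℤ)) := by positivity
  refine hausdorffDist_frontier_le_of_sdiff_eq hpos isClosed_remainderBox
    (serpentine_sdiff_remainderBox hb) ?_ ?_
  · rintro ⟨x, y⟩ hp
    obtain ⟨hx, rfl⟩ := frontier_serpentine_Icc_inter_remainderBox_subset (hb1 _ hk') hp
    exact exists_mem_frontier_serpentine_dist_le hk Icc_subset_Ici_self (ha _ hk') hbk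
      (hb0 _ hk') (hb1 _ hk').le hx
  · rintro ⟨x, y⟩ ⟨-, hx, hy⟩
    refine ⟨(x, 3 ^ (-(k : ℤ))), remainderBox_top_subset_frontier_serpentine_Icc hk hbk
      (hb0 _ hk) (hb1 _ hk').le ⟨hx, rfl⟩, ?_⟩
    rw [dist_prod_same_left]
    exact (Real.dist_le_of_mem_Icc hy (right_mem_Icc.2 hpos)).trans_eq (sub_zero _)

end Serpentine

/-- the boundary of the truncated domain `Ω_k` approximates the
boundary of `Ω` within `3⁻ᵏ` in the Hausdorff distance. -/
theorem frontier_approx_hausdorff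
    (a b : ℝ) (aseq bseq : ℕ → ℚ)
    (ha : 0 < a) (hab : a < b) (hb : b < 1 / 2)
    (haInc : ∀ n, 1 ≤ n → aseq n < aseq (n + 1))
    (hbDec : ∀ n, 1 ≤ n → bseq (n + 1) < bseq n)
    (haLim : Filter.Tendsto (fun n => (aseq n : ℝ)) Filter.atTop (nhds a))
    (hbLim : Filter.Tendsto (fun n => (bseq n : ℝ)) Filter.atTop (nhds b))
    (hbnd : ∀ n, 1 ≤ n →
      0 < (aseq n : ℝ) ∧ (aseq n : ℝ) < a ∧ b < (bseq n : ℝ) ∧ (bseq n : ℝ) < 1 / 2)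
    (Q : Set (ℝ × ℝ)) (hQ : Q = Set.Icc (-1 : ℝ) 1 ×ˢ Set.Icc (-1 : ℝ) 1)
    (S L R : ℕ → Set (ℝ × ℝ))
    (hS : ∀ n, S n =
      Set.Ioo (-(bseq n : ℝ)) (bseq n) ×ˢ Set.Ioc ((3 : ℝ) ^ (-(n : ℤ))) ((3 : ℝ) ^ (1 - (n : ℤ))))
    (hL : ∀ n, L n =
      Set.Icc (-(bseq n : ℝ)) (aseq n) ×ˢ
        Set.Icc (8 * (3 : ℝ) ^ (-((n : ℤ) + 1))) ((3 : ℝ) ^ (1 - (n : ℤ))))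
    (hR : ∀ n, R n =
      Set.Icc (-(aseq n : ℝ)) (bseq n) ×ˢ
        Set.Icc (5 * (3 : ℝ) ^ (-((n : ℤ) + 1))) (2 * (3 : ℝ) ^ (-(n : ℤ))))
    (Ω : Set (ℝ × ℝ))
    (hΩ : Ω = ((Set.univ : Set (ℝ × ℝ)) \ Q) ∪ ⋃ n ∈ {n : ℕ | 1 ≤ n}, (S n \ (L n ∪ R n)))
    (Ωk : ℕ → Set (ℝ × ℝ))
    (hΩk : ∀ k, Ωk k =
      ((Set.univ : Set (ℝ × ℝ)) \ Q) ∪ ⋃ n ∈ Set.Icc 1 k, (S n \ (L n ∪ R n))) :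
    ∀ k, 1 ≤ k →
      Metric.hausdorffDist (frontier (Ωk k)) (frontier Ω) ≤ (3 : ℝ) ^ (-(k : ℤ)) := by
  intro k hk
  rw [hΩk, hΩ, funext hS, funext hL, funext hR, hQ, ← compl_eq_univ_sdiff]
  exact frontier_approx_hausdorff_general (a := fun n => aseq n) (b := fun n => bseq n)
    (fun n hn => (hbnd n hn).1.le)
    (antitoneOn_nat_Ici_of_succ_le fun n hn => by exact_mod_cast (hbDec n hn).le)
    (fun n hn => by linarith [hbnd n hn]) (fun n hn => by linarith [hbnd n hn]) hk
end

section
/- Let U ⊆ ℂ be a bounded, open, connected, simply connected set with 0 ∈ U, and let V ⊆ U be an open, connected, simply connected set with 0 ∈ V. Let g : 𝔻 → U and h : 𝔻 → V be biholomorphisms from the open unit disk with g(0) = 0 and h(0) = 0. Suppose ε > 0 and every point of the frontier of V lies at distance less than ε from the frontier of U. Then |g′(0)| − |h′(0)| ≤ 4·√|g′(0)|·√ε. -/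
open Metric

/-!
Let `r = |g'(0)|`. By the Koebe growth and quarter theorems, `g w` has distance at least
`r (1 - |w|)² / 16` from `∂U`. If `16 ε = r (1 - s)²`, the connected set `g (ball 0 s)` therefore
misses `∂V`, so it lies in `V`, and the Schwarz lemma for `h⁻¹ ∘ g` gives `s r ≤ |h'(0)|`.

For `p ∉ U`, the univalent function `g - p` has a holomorphic square root `q` on the disk with
`q z + q w ≠ 0`, so `T = (q - q 0) / (q + q 0)` is univalent with `T 0 = 0` and `T z * T w ≠ 1`, and
Koebe's estimate at the origin amounts to the Bieberbach–Eilenberg inequality `|T'(0)| ≤ 1`. Disk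
automorphisms move the estimate to every point, and integrating it along radii yields the growth
theorem.

For `|T'(0)| ≤ 1`, let `A` be the image under `T` of the annulus `ρ ≤ |z| ≤ s` with `s < 1`, and
let `c < |T'(0)|`. Measured by `|dw|² / |w|²`, the area of `A` is at least `2π log (s / ρ)`, since
`z T'(z) / T(z)` is holomorphic with value `1` at the origin. For small `ρ` the disjoint sets `A`
and `A⁻¹`, which have equal area, both lie in the annulus `c ρ ≤ |w| ≤ 1 / (c ρ)` of area
`4π log (1 / (c ρ))`. Hence `s c ≤ 1`.
-/

section

open Set Filter Function MeasureTheory Topology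

/-- Univalent (also called schlicht) functions: holomorphic and injective on `s`. -/
structure UnivalentOn (f : ℂ → ℂ) (s : Set ℂ) : Prop where
  differentiableOn : DifferentiableOn ℂ f s
  injOn : InjOn f s

namespace UnivalentOn

variable {f g : ℂ → ℂ} {s t : Set ℂ} {a : ℂ}

lemma comp (hg : UnivalentOn g t) (hf : UnivalentOn f s) (hst : MapsTo f s t) :
    UnivalentOn (g ∘ f) s :=
  ⟨hg.differentiableOn.comp hf.differentiableOn hst, hg.injOn.comp hf.injOn hst⟩

lemma sub_const (hf : UnivalentOn f s) (c : ℂ) : UnivalentOn (fun z ↦ f z - c) s :=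
  ⟨hf.differentiableOn.sub_const c, fun _ hz _ hw h ↦ hf.injOn hz hw (sub_left_inj.1 h)⟩

lemma hasDerivAt (hf : UnivalentOn f s) (hs : IsOpen s) (ha : a ∈ s) :
    HasDerivAt f (deriv f a) a :=
  hf.differentiableOn.hasDerivAt (hs.mem_nhds ha)

lemma not_eventually_eq_const (hf : UnivalentOn f s) (hs : IsOpen s) (ha : a ∈ s) :
    ¬ ∀ᶠ z in 𝓝 a, f z = f a := fun h ↦ by
  have hsing : ∀ᶠ z in 𝓝 a, z = a := by
    filter_upwards [h, hs.mem_nhds ha] with z hz hzs using hf.injOn hzs ha hz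
  obtain ⟨z, hza, hne⟩ :=
    ((hsing.filter_mono nhdsWithin_le_nhds).and (self_mem_nhdsWithin : {a}ᶜ ∈ 𝓝[≠] a)).exists
  exact hne hza

lemma map_nhds_eq (hf : UnivalentOn f s) (hs : IsOpen s) (ha : a ∈ s) :
    map f (𝓝 a) = 𝓝 (f a) :=
  le_antisymm (hf.hasDerivAt hs ha).continuousAt <|
    (hf.differentiableOn.analyticAt (hs.mem_nhds ha)).eventually_constant_or_nhds_le_map_nhds
      |>.resolve_left (hf.not_eventually_eq_const hs ha)

lemma isOpen_image (hf : UnivalentOn f s) (hs : IsOpen s) : IsOpen (f '' s) := by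
  refine isOpen_iff_mem_nhds.2 (forall_mem_image.2 fun a ha ↦ ?_)
  rw [← hf.map_nhds_eq hs ha]
  exact image_mem_map (hs.mem_nhds ha)

lemma eventually_deriv_ne_zero (hf : UnivalentOn f s) (hs : IsOpen s) (ha : a ∈ s) :
    ∀ᶠ z in 𝓝[≠] a, deriv f z ≠ 0 := by
  refine (hf.differentiableOn.analyticAt (hs.mem_nhds ha)).deriv
    |>.eventually_eq_zero_or_eventually_ne_zero.resolve_left fun h ↦ ?_
  obtain ⟨r, hr, hball⟩ := eventually_nhds_iff_ball.1 (h.and (hs.mem_nhds ha))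
  refine hf.not_eventually_eq_const hs ha (mem_of_superset (ball_mem_nhds a hr) fun z hz ↦ ?_)
  exact isOpen_ball.is_const_of_deriv_eq_zero (convex_ball a r).isPreconnected
    (hf.differentiableOn.mono fun w hw ↦ (hball w hw).2) (fun w hw ↦ (hball w hw).1) hz
    (mem_ball_self hr)

lemma tendsto_leftInvOn (hf : UnivalentOn f s) (hs : IsOpen s) (hg : LeftInvOn g f s)
    (ha : a ∈ s) : Tendsto g (𝓝 (f a)) (𝓝 a) := by
  rw [← hf.map_nhds_eq hs ha, tendsto_map'_iff]
  exact tendsto_id.congr' (eventually_of_mem (hs.mem_nhds ha) fun z hz ↦ (hg hz).symm)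

lemma differentiableAt_leftInvOn_of_deriv_ne_zero (hf : UnivalentOn f s) (hs : IsOpen s)
    (hg : LeftInvOn g f s) (ha : a ∈ s) (hd : deriv f a ≠ 0) : DifferentiableAt ℂ g (f a) := by
  have hcont : Tendsto g (𝓝 (f a)) (𝓝 (g (f a))) := by
    simpa only [hg ha] using hf.tendsto_leftInvOn hs hg ha
  have hright : ∀ᶠ w in 𝓝 (f a), f (g w) = w := by
    filter_upwards [(hf.isOpen_image hs).mem_nhds (mem_image_of_mem f ha)] with w hw
    exact hg.rightInvOn_image hw
  have hder : HasDerivAt f (deriv f a) (g (f a)) := by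
    simpa only [hg ha] using hf.hasDerivAt hs ha
  exact (hder.of_local_left_inverse hcont hd hright).differentiableAt

theorem differentiableOn_leftInvOn (hf : UnivalentOn f s) (hs : IsOpen s)
    (hg : LeftInvOn g f s) : DifferentiableOn ℂ g (f '' s) := by
  refine forall_mem_image.2 fun a ha ↦ DifferentiableAt.differentiableWithinAt ?_
  have hlim : Tendsto g (𝓝 (f a)) (𝓝 a) := hf.tendsto_leftInvOn hs hg ha
  have hcont : ContinuousAt g (f a) := by simpa only [ContinuousAt, hg ha] using hlim
  -- The zeros of `deriv f` are isolated, so they are removable singularities of `g`.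
  have hd : ∀ᶠ w in 𝓝 (f a), g w ≠ a → deriv f (g w) ≠ 0 :=
    hlim.eventually (eventually_nhdsWithin_iff.1 (hf.eventually_deriv_ne_zero hs ha))
  refine (Complex.analyticAt_of_differentiable_on_punctured_nhds_of_continuousAt
    (eventually_nhdsWithin_iff.2 ?_) hcont).differentiableAt
  filter_upwards [hd, (hf.isOpen_image hs).mem_nhds (mem_image_of_mem f ha)]
  rintro _ hz ⟨z, hzs, rfl⟩ hne
  rw [hg hzs] at hz
  exact hf.differentiableAt_leftInvOn_of_deriv_ne_zero hs hg hzs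
    (hz fun h ↦ hne (congrArg f h))

theorem deriv_ne_zero (hf : UnivalentOn f s) (hs : IsOpen s) (ha : a ∈ s) : deriv f a ≠ 0 := by
  have hinv : LeftInvOn (invFunOn f s) f s := hf.injOn.leftInvOn_invFunOn
  have hg : DifferentiableAt ℂ (invFunOn f s) (f a) :=
    (hf.differentiableOn_leftInvOn hs hinv).differentiableAt
      ((hf.isOpen_image hs).mem_nhds (mem_image_of_mem f ha))
  have hcomp : HasDerivAt id (deriv (invFunOn f s) (f a) * deriv f a) a :=
    (hg.hasDerivAt.comp a (hf.hasDerivAt hs ha)).congr_of_eventuallyEq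
      (eventually_of_mem (hs.mem_nhds ha) fun z hz ↦ (hinv hz).symm)
  exact right_ne_zero_of_mul (hcomp.unique (hasDerivAt_id a) ▸ one_ne_zero)

lemma dslope_ne_zero (hf : UnivalentOn f s) (hs : IsOpen s) {b : ℂ} (ha : a ∈ s) (hb : b ∈ s) :
    dslope f a b ≠ 0 := by
  rcases eq_or_ne b a with rfl | hba
  · rw [dslope_same]
    exact hf.deriv_ne_zero hs ha
  · rw [dslope_of_ne f hba, slope_def_field]
    exact div_ne_zero (sub_ne_zero.2 (hf.injOn.ne hb ha hba)) (sub_ne_zero.2 hba)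

theorem image_ne_univ (hf : UnivalentOn f s) (hs : IsOpen s) (hsb : Bornology.IsBounded s) :
    f '' s ≠ univ := fun huniv ↦ by
  have hinv : LeftInvOn (invFunOn f s) f s := hf.injOn.leftInvOn_invFunOn
  have hentire : Differentiable ℂ (invFunOn f s) :=
    differentiableOn_univ.1 (huniv ▸ hf.differentiableOn_leftInvOn hs hinv)
  have hmem (w : ℂ) : invFunOn f s w ∈ s := invFunOn_mem (huniv ▸ mem_univ w : w ∈ f '' s)
  have hconst (z w : ℂ) : invFunOn f s z = invFunOn f s w :=
    hentire.apply_eq_apply_of_bounded (hsb.subset (range_subset_iff.2 hmem)) z w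
  obtain ⟨a, ha, hfa⟩ : (0 : ℂ) ∈ f '' s := huniv ▸ mem_univ 0
  obtain ⟨b, hb, hfb⟩ : (1 : ℂ) ∈ f '' s := huniv ▸ mem_univ 1
  have hab : a = b := by rw [← hinv ha, ← hinv hb, hconst (f a) (f b)]
  exact zero_ne_one (hfa.symm.trans ((congrArg f hab).trans hfb))

lemma nonempty_frontier_image (hf : UnivalentOn f s) (hs : IsOpen s)
    (hsb : Bornology.IsBounded s) (hne : s.Nonempty) : (frontier (f '' s)).Nonempty :=
  nonempty_frontier_iff.2 ⟨hne.image f, hf.image_ne_univ hs hsb⟩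

end UnivalentOn

section LogArea

/-- The logarithmic area `|dw|² / |w|²`, that is, the area of the image under `log`. It is
invariant under inversion, and `T` scales it by `‖T' / T‖²`. -/
noncomputable def logAreaMeasure : Measure ℂ :=
  volume.withDensity fun w ↦ ENNReal.ofReal (‖w‖ ^ 2)⁻¹

/-- The closed annulus with radii `a` and `b` centred at the origin. -/
def closedAnnulus (a b : ℝ) : Set ℂ := {z | ‖z‖ ∈ Icc a b}

/-- The half-open rectangle which `Complex.exp` maps bijectively onto `closedAnnulus a b`. -/
noncomputable def logRectangle (a b : ℝ) : Set ℂ :=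
  Icc (Real.log a) (Real.log b) ×ℂ Ioc (-Real.pi) Real.pi

lemma det_smul_one_eq_sq_norm (c : ℂ) : (c • (1 : ℂ →L[ℝ] ℂ)).det = ‖c‖ ^ 2 := by
  rw [← Complex.normSq_eq_norm_sq, ← Algebra.norm_complex_apply, Algebra.norm_apply]
  rfl

lemma logAreaMeasure_image {f f' : ℂ → ℂ} {s : Set ℂ} (hs : MeasurableSet s)
    (hf : ∀ z ∈ s, HasDerivAt f (f' z) z) (hinj : InjOn f s) :
    logAreaMeasure (f '' s) = ∫⁻ z in s, ENNReal.ofReal (‖f' z / f z‖ ^ 2) := by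
  rw [logAreaMeasure, withDensity_apply', lintegral_image_eq_lintegral_abs_det_fderiv_mul volume hs
    (fun z hz ↦ (hf z hz).complexToReal_fderiv.hasFDerivWithinAt) hinj]
  refine lintegral_congr fun z ↦ ?_
  rw [det_smul_one_eq_sq_norm, ← ENNReal.ofReal_mul (abs_nonneg _), abs_of_nonneg (by positivity),
    norm_div, div_pow, div_eq_mul_inv]

lemma logAreaMeasure_inv {s : Set ℂ} (hs : MeasurableSet s) (h0 : ∀ z ∈ s, z ≠ 0) :
    logAreaMeasure s⁻¹ = logAreaMeasure s := by
  rw [← image_inv_eq_inv, logAreaMeasure_image hs (fun z hz ↦ hasDerivAt_inv (h0 z hz))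
    inv_injective.injOn, logAreaMeasure, withDensity_apply']
  refine setLIntegral_congr_fun hs fun z hz ↦ congrArg ENNReal.ofReal ?_
  have : ‖z‖ ≠ 0 := norm_ne_zero_iff.2 (h0 z hz)
  simp only [norm_div, norm_neg, norm_inv, norm_pow]
  field_simp

lemma setLIntegral_reProdIm {s t : Set ℝ} {F : ℂ → ENNReal} (hs : MeasurableSet s)
    (ht : MeasurableSet t) (hF : AEMeasurable F (volume.restrict (s ×ℂ t))) :
    ∫⁻ z in s ×ℂ t, F z = ∫⁻ x in s, ∫⁻ y in t, F (x + y * Complex.I) := by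
  have hmp := Complex.volume_preserving_equiv_real_prod.symm.restrict_preimage
    ((Complex.measurable_re hs).inter (Complex.measurable_im ht))
  calc ∫⁻ z in s ×ℂ t, F z
      = ∫⁻ p in s ×ˢ t, F (Complex.measurableEquivRealProd.symm p) ∂volume.prod volume :=
        (hmp.lintegral_comp_emb Complex.measurableEquivRealProd.symm.measurableEmbedding F).symm
    _ = ∫⁻ x in s, ∫⁻ y in t, F (Complex.measurableEquivRealProd.symm (x, y)) :=
        setLIntegral_prod _ (hF.comp_quasiMeasurePreserving hmp.quasiMeasurePreserving)
    _ = ∫⁻ x in s, ∫⁻ y in t, F (x + y * Complex.I) := by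
        simp only [Complex.measurableEquivRealProd_symm_apply, Complex.mk_eq_add_mul_I]

section Annulus

variable {a b : ℝ}

lemma isCompact_closedAnnulus : IsCompact (closedAnnulus a b) :=
  (isCompact_closedBall (0 : ℂ) b).of_isClosed_subset (isClosed_Icc.preimage continuous_norm)
    fun _ hz ↦ mem_closedBall_zero_iff.2 hz.2

lemma closedAnnulus_subset_ball {R : ℝ} (hb : b < R) : closedAnnulus a b ⊆ ball 0 R :=
  fun _ hz ↦ mem_ball_zero_iff.2 (hz.2.trans_lt hb)

lemma ne_zero_of_mem_closedAnnulus (ha : 0 < a) {z : ℂ} (hz : z ∈ closedAnnulus a b) : z ≠ 0 :=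
  norm_pos_iff.1 (ha.trans_le hz.1)

lemma inv_closedAnnulus_inv (ha : 0 < a) : (closedAnnulus a a⁻¹)⁻¹ = closedAnnulus a a⁻¹ := by
  have hsub : (closedAnnulus a a⁻¹)⁻¹ ⊆ closedAnnulus a a⁻¹ := fun z hz ↦ by
    rw [Set.mem_inv, closedAnnulus, mem_ofPred_eq, norm_inv] at hz
    have hpos : 0 < ‖z‖ := inv_pos.1 (ha.trans_le hz.1)
    exact ⟨(inv_le_inv₀ hpos ha).1 hz.2, (le_inv_comm₀ ha hpos).1 hz.1⟩
  exact hsub.antisymm (Set.inv_subset.1 hsub)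

lemma measurableSet_logRectangle : MeasurableSet (logRectangle a b) :=
  (Complex.measurable_re measurableSet_Icc).inter (Complex.measurable_im measurableSet_Ioc)

lemma injOn_exp_logRectangle : InjOn Complex.exp (logRectangle a b) := fun _ hz _ hw h ↦
  Complex.exp_inj_of_neg_pi_lt_of_le_pi hz.2.1 hz.2.2 hw.2.1 hw.2.2 h

lemma exp_image_logRectangle (ha : 0 < a) (hb : 0 < b) :
    Complex.exp '' logRectangle a b = closedAnnulus a b := by
  ext z
  constructor
  · rintro ⟨ζ, hζ, rfl⟩
    rw [closedAnnulus, mem_ofPred_eq, Complex.norm_exp]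
    exact ⟨(Real.log_le_iff_le_exp ha).1 hζ.1.1, (Real.le_log_iff_exp_le hb).1 hζ.1.2⟩
  · intro hz
    have hpos : 0 < ‖z‖ := ha.trans_le hz.1
    refine ⟨Complex.log z, ⟨?_, Complex.neg_pi_lt_log_im z, Complex.log_im_le_pi z⟩,
      Complex.exp_log (norm_pos_iff.1 hpos)⟩
    rw [mem_preimage, Complex.log_re]
    exact ⟨Real.log_le_log ha hz.1, Real.log_le_log hpos hz.2⟩

lemma volume_logRectangle (ha : 0 < a) (hb : 0 < b) :
    volume (logRectangle a b) = ENNReal.ofReal (2 * Real.pi * Real.log (b / a)) := by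
  rw [← setLIntegral_one, logRectangle, setLIntegral_reProdIm measurableSet_Icc measurableSet_Ioc
    aemeasurable_const]
  simp only [setLIntegral_const, one_mul, Real.volume_Ioc, Real.volume_Icc]
  rw [← ENNReal.ofReal_mul (by linarith [Real.pi_pos]), Real.log_div hb.ne' ha.ne']
  ring_nf

theorem logAreaMeasure_closedAnnulus (ha : 0 < a) (hb : 0 < b) :
    logAreaMeasure (closedAnnulus a b) = ENNReal.ofReal (2 * Real.pi * Real.log (b / a)) := by
  rw [← exp_image_logRectangle ha hb, logAreaMeasure_image measurableSet_logRectangle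
    (fun z _ ↦ Complex.hasDerivAt_exp z) injOn_exp_logRectangle, ← volume_logRectangle ha hb]
  simp only [div_self (Complex.exp_ne_zero _), norm_one, one_pow, ENNReal.ofReal_one,
    setLIntegral_one]

end Annulus

lemma map_le_circleAverage {E : Type*} [NormedAddCommGroup E] [NormedSpace ℂ E]
    [CompleteSpace E] {φ : E → ℝ} {f : ℂ → E} {c : ℂ} {R : ℝ} (hφ : ConvexOn ℝ univ φ)
    (hφc : Continuous φ) (hf : DiffContOnCl ℂ f (ball c |R|)) :
    φ (f c) ≤ Real.circleAverage (φ ∘ f) c R := by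
  rw [← hf.circleAverage, Real.circleAverage_eq_intervalAverage,
    Real.circleAverage_eq_intervalAverage]
  have hfc : ContinuousOn f (sphere c |R|) := hf.continuousOn_ball.mono sphere_subset_closedBall
  refine hφ.map_set_average_le hφc.continuousOn isClosed_univ ?_ ?_ ?_ ?_ ?_
  · simp [uIoc_of_le Real.two_pi_pos.le, Real.pi_pos]
  · exact measure_Ioc_lt_top.ne
  · exact .of_forall fun _ ↦ mem_univ _
  · exact intervalIntegrable_iff.1 hfc.circleIntegrable'
  · exact intervalIntegrable_iff.1 (hφc.comp_continuousOn hfc).circleIntegrable'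

lemma setLIntegral_circleMap {G : ℂ → ℝ} {c : ℂ} {R : ℝ} (hG : CircleIntegrable G c R)
    (hG0 : ∀ z, 0 ≤ G z) :
    ∫⁻ θ in Ioc (-Real.pi) Real.pi, ENNReal.ofReal (G (circleMap c R θ)) =
      ENNReal.ofReal (2 * Real.pi * Real.circleAverage G c R) := by
  have hper : Periodic (fun θ ↦ G (circleMap c R θ)) (2 * Real.pi) :=
    (periodic_circleMap c R).comp G
  have hend : -Real.pi + 2 * Real.pi = Real.pi := by ring
  have hint : IntervalIntegrable (fun θ ↦ G (circleMap c R θ)) volume (-Real.pi) Real.pi := by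
    have hG' : IntervalIntegrable (fun θ ↦ G (circleMap c R θ)) volume 0 (0 + 2 * Real.pi) := by
      simpa only [zero_add] using! hG
    exact hper.intervalIntegrable Real.two_pi_pos.ne' hG' _ _
  rw [← ofReal_integral_eq_lintegral_ofReal hint.1 (.of_forall fun _ ↦ hG0 _),
    ← intervalIntegral.integral_of_le (neg_le_self Real.pi_pos.le), Real.circleAverage_def,
    smul_eq_mul, mul_inv_cancel_left₀ Real.two_pi_pos.ne']
  simpa only [hend, zero_add] using
    congrArg ENNReal.ofReal (hper.intervalIntegral_add_eq (-Real.pi) 0)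

lemma sq_norm_mul_volume_logRectangle_le {m : ℂ → ℂ} {a b R : ℝ} (hb : 0 < b) (hbR : b < R)
    (hm : DifferentiableOn ℂ m (ball 0 R)) :
    ENNReal.ofReal (‖m 0‖ ^ 2) * volume (logRectangle a b) ≤
      ∫⁻ ζ in logRectangle a b, ENNReal.ofReal (‖m (Complex.exp ζ)‖ ^ 2) := by
  have hexp (x : ℝ) (hx : x ∈ Icc (Real.log a) (Real.log b)) : Real.exp x < R :=
    ((Real.le_log_iff_exp_le hb).1 hx.2).trans_lt hbR
  have hcont : ContinuousOn (fun ζ ↦ ‖m (Complex.exp ζ)‖ ^ 2) (logRectangle a b) :=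
    ((hm.continuousOn.comp Complex.continuous_exp.continuousOn fun ζ hζ ↦ by
      simpa only [mem_ball_zero_iff, Complex.norm_exp] using hexp _ hζ.1).norm).pow 2
  rw [← setLIntegral_const, logRectangle, setLIntegral_reProdIm measurableSet_Icc measurableSet_Ioc
    aemeasurable_const, setLIntegral_reProdIm measurableSet_Icc measurableSet_Ioc
    (hcont.aemeasurable measurableSet_logRectangle).ennreal_ofReal]
  refine setLIntegral_mono' measurableSet_Icc fun x hx ↦ ?_
  have hball : closedBall (0 : ℂ) |Real.exp x| ⊆ ball 0 R :=
    closedBall_subset_ball (by rw [Real.abs_exp]; exact hexp x hx)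
  have hmean : ‖m 0‖ ^ 2 ≤ Real.circleAverage (fun z ↦ ‖m z‖ ^ 2) 0 (Real.exp x) :=
    map_le_circleAverage (convexOn_univ_norm.pow (fun _ _ ↦ norm_nonneg _) 2)
      (continuous_norm.pow 2) (hm.diffContOnCl_ball hball)
  have hint : CircleIntegrable (fun z ↦ ‖m z‖ ^ 2) 0 (Real.exp x) :=
    ((hm.continuousOn.mono (sphere_subset_closedBall.trans hball)).norm.pow 2).circleIntegrable'
  have hcircle (y : ℝ) : Complex.exp (x + y * Complex.I) = circleMap 0 (Real.exp x) y := by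
    rw [circleMap_zero, Complex.exp_add, Complex.ofReal_exp]
  simp only [hcircle]
  rw [setLIntegral_circleMap hint fun _ ↦ by positivity, setLIntegral_const, Real.volume_Ioc,
    ← ENNReal.ofReal_mul (by positivity)]
  refine ENNReal.ofReal_le_ofReal ?_
  calc ‖m 0‖ ^ 2 * (Real.pi - -Real.pi) = 2 * Real.pi * ‖m 0‖ ^ 2 := by ring
    _ ≤ 2 * Real.pi * Real.circleAverage (fun z ↦ ‖m z‖ ^ 2) 0 (Real.exp x) := by gcongr

theorem le_logAreaMeasure_image_closedAnnulus {T : ℂ → ℂ} {a b R : ℝ} (ha : 0 < a) (hb : 0 < b)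
    (hbR : b < R) (hT : UnivalentOn T (ball 0 R)) (hT0 : T 0 = 0) :
    ENNReal.ofReal (2 * Real.pi * Real.log (b / a)) ≤
      logAreaMeasure (T '' closedAnnulus a b) := by
  have h0 : (0 : ℂ) ∈ ball (0 : ℂ) R := mem_ball_self (hb.trans hbR)
  set m : ℂ → ℂ := fun z ↦ deriv T z / dslope T 0 z
  have hm : DifferentiableOn ℂ m (ball 0 R) :=
    (hT.differentiableOn.deriv isOpen_ball).div
      ((Complex.differentiableOn_dslope (isOpen_ball.mem_nhds h0)).2 hT.differentiableOn)
      fun z hz ↦ hT.dslope_ne_zero isOpen_ball h0 hz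
  have hm0 : m 0 = 1 := by
    simp only [m, dslope_same, div_self (hT.deriv_ne_zero isOpen_ball h0)]
  have hm' (z : ℂ) (hz : z ≠ 0) : deriv T z * z / T z = m z := by
    simp only [m, dslope_of_ne T hz, slope_def_field, hT0, sub_zero, div_div_eq_mul_div]
  have hexp : MapsTo Complex.exp (logRectangle a b) (closedAnnulus a b) :=
    mapsTo_iff_image_subset.2 (exp_image_logRectangle ha hb).subset
  have hball : MapsTo Complex.exp (logRectangle a b) (ball 0 R) :=
    hexp.mono_right (closedAnnulus_subset_ball hbR)
  rw [← exp_image_logRectangle ha hb, ← image_comp, logAreaMeasure_image measurableSet_logRectangle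
    (fun ζ hζ ↦ (hT.hasDerivAt isOpen_ball (hball hζ)).comp ζ (Complex.hasDerivAt_exp ζ))
    (hT.injOn.comp injOn_exp_logRectangle hball)]
  simp only [comp_apply, hm' _ (Complex.exp_ne_zero _)]
  simpa only [hm0, norm_one, one_pow, ENNReal.ofReal_one, one_mul, volume_logRectangle ha hb]
    using sq_norm_mul_volume_logRectangle_le (a := a) hb hbR hm

end LogArea

section BieberbachEilenberg

variable {T : ℂ → ℂ} {a b c s δ R : ℝ}

lemma two_mul_logAreaMeasure_le {S : Set ℂ} (hS : MeasurableSet S) (hδ : 0 < δ)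
    (hsub : S ⊆ closedAnnulus δ δ⁻¹) (hdisj : Disjoint S S⁻¹) :
    2 * logAreaMeasure S ≤ ENNReal.ofReal (2 * Real.pi * (2 * Real.log δ⁻¹)) := by
  have hsub' : S⁻¹ ⊆ closedAnnulus δ δ⁻¹ := by
    rwa [Set.inv_subset, inv_closedAnnulus_inv hδ]
  calc 2 * logAreaMeasure S = logAreaMeasure S + logAreaMeasure S⁻¹ := by
        rw [logAreaMeasure_inv hS fun z hz ↦ ne_zero_of_mem_closedAnnulus hδ (hsub hz), two_mul]
    _ = logAreaMeasure (S ∪ S⁻¹) := (measure_union hdisj hS.inv).symm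
    _ ≤ logAreaMeasure (closedAnnulus δ δ⁻¹) := measure_mono (union_subset hsub hsub')
    _ = ENNReal.ofReal (2 * Real.pi * (2 * Real.log δ⁻¹)) := by
        rw [logAreaMeasure_closedAnnulus hδ (inv_pos.2 hδ), div_eq_mul_inv, ← sq, Real.log_pow,
          Nat.cast_ofNat]

lemma mul_le_of_mapsTo_closedAnnulus (ha : 0 < a) (hab : a ≤ b) (hbR : b < R) (hδ : 0 < δ)
    (hT : UnivalentOn T (ball 0 R)) (hT0 : T 0 = 0)
    (hne : ∀ z ∈ ball (0 : ℂ) R, ∀ w ∈ ball (0 : ℂ) R, T z * T w ≠ 1)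
    (hmaps : MapsTo T (closedAnnulus a b) (closedAnnulus δ δ⁻¹)) : b * δ ≤ a := by
  have hb : 0 < b := ha.trans_le hab
  have hball : closedAnnulus a b ⊆ ball 0 R := closedAnnulus_subset_ball hbR
  have hmeas : MeasurableSet (T '' closedAnnulus a b) :=
    (isCompact_closedAnnulus.image_of_continuousOn
      (hT.differentiableOn.continuousOn.mono hball)).measurableSet
  have hdisj : Disjoint (T '' closedAnnulus a b) (T '' closedAnnulus a b)⁻¹ := by
    refine disjoint_left.2 ?_
    rintro _ ⟨z, hz, rfl⟩ ⟨w, hw, hwz⟩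
    refine hne z (hball hz) w (hball hw) ?_
    rw [hwz, mul_inv_cancel₀ (ne_zero_of_mem_closedAnnulus hδ (hmaps hz))]
  have harea := (mul_le_mul_right (le_logAreaMeasure_image_closedAnnulus ha hb hbR hT hT0) 2).trans
    (two_mul_logAreaMeasure_le hmeas hδ hmaps.image_subset hdisj)
  have hδ1 : 1 ≤ δ⁻¹ := by
    have hTa := hmaps (show (a : ℂ) ∈ closedAnnulus a b by
      rw [closedAnnulus, mem_ofPred_eq, Complex.norm_of_nonneg ha.le]; exact left_mem_Icc.2 hab)
    have hδδ : δ ≤ δ⁻¹ := hTa.1.trans hTa.2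
    exact (one_le_inv₀ hδ).2 (by nlinarith [mul_inv_cancel₀ hδ.ne'])
  rw [← ENNReal.ofReal_ofNat, ← ENNReal.ofReal_mul zero_le_two, ENNReal.ofReal_le_ofReal_iff
    (mul_nonneg Real.two_pi_pos.le (mul_nonneg zero_le_two (Real.log_nonneg hδ1))),
    mul_left_comm] at harea
  have hlog : Real.log (b / a) ≤ Real.log δ⁻¹ := by
    nlinarith [Real.two_pi_pos]
  have hdiv : b / a ≤ δ⁻¹ := (Real.log_le_log_iff (div_pos hb ha) (inv_pos.2 hδ)).1 hlog
  rwa [div_le_iff₀ ha, ← div_eq_inv_mul, le_div_iff₀ hδ] at hdiv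

lemma eventually_mapsTo_closedAnnulus (hsR : s < R) (hs : 0 < s) (hc : 0 < c)
    (hcT : c < ‖deriv T 0‖) (hT : UnivalentOn T (ball 0 R)) (hT0 : T 0 = 0) :
    ∀ᶠ ρ in 𝓝[>] (0 : ℝ),
      MapsTo T (closedAnnulus ρ s) (closedAnnulus (c * ρ) (c * ρ)⁻¹) := by
  have h0 : (0 : ℂ) ∈ ball (0 : ℂ) R := mem_ball_self (hs.trans hsR)
  have hcont : ContinuousOn T (closedBall 0 s) :=
    hT.differentiableOn.continuousOn.mono (closedBall_subset_ball hsR)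
  obtain ⟨r, hr, hnear⟩ : ∃ r > 0, ∀ z ∈ ball (0 : ℂ) r, c * ‖z‖ ≤ ‖T z‖ := by
    have hdslope : ContinuousAt (dslope T 0) 0 :=
      continuousAt_dslope_same.2 (hT.hasDerivAt isOpen_ball h0).differentiableAt
    have hlt : ∀ᶠ z in 𝓝 0, c < ‖dslope T 0 z‖ :=
      hdslope.norm.eventually_const_lt (by simpa only [dslope_same] using hcT)
    refine eventually_nhds_iff_ball.1 (hlt.mono fun z hz ↦ ?_)
    have hTz : z * dslope T 0 z = T z := by simpa [hT0] using sub_smul_dslope T 0 z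
    rw [← hTz, norm_mul, mul_comm]
    gcongr
  obtain ⟨d, hd, hfar⟩ : ∃ d > 0, ∀ z ∈ closedAnnulus r s, d ≤ ‖T z‖ := by
    refine isCompact_closedAnnulus.exists_forall_le'
      (hcont.mono fun z hz ↦ mem_closedBall_zero_iff.2 hz.2).norm fun z hz ↦ norm_pos_iff.2 ?_
    rw [← hT0]
    exact hT.injOn.ne (closedAnnulus_subset_ball hsR hz) h0 (ne_zero_of_mem_closedAnnulus hr hz)
  obtain ⟨M, hM⟩ : ∃ M, ∀ z ∈ closedBall (0 : ℂ) s, ‖T z‖ ≤ M :=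
    (isCompact_closedBall 0 s).exists_bound_of_continuousOn hcont
  have hlim : Tendsto (fun ρ ↦ c * ρ) (𝓝[>] 0) (𝓝[>] 0) :=
    tendsto_iff_comap.2 (comap_mulLeft_nhdsGT_zero hc).ge
  filter_upwards [hlim.eventually (nhdsWithin_le_nhds (eventually_le_nhds hd)),
    (tendsto_inv_nhdsGT_zero.comp hlim).eventually_ge_atTop M] with ρ hρd hρM z hz
  refine ⟨?_, (hM z (mem_closedBall_zero_iff.2 hz.2)).trans hρM⟩
  rcases lt_or_ge ‖z‖ r with hzr | hrz
  · exact (mul_le_mul_of_nonneg_left hz.1 hc.le).trans (hnear z (mem_ball_zero_iff.2 hzr))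
  · exact hρd.trans (hfar z ⟨hrz, hz.2⟩)

theorem norm_deriv_le_one_of_mul_ne_one (hT : UnivalentOn T (ball 0 1)) (hT0 : T 0 = 0)
    (hne : ∀ z ∈ ball (0 : ℂ) 1, ∀ w ∈ ball (0 : ℂ) 1, T z * T w ≠ 1) : ‖deriv T 0‖ ≤ 1 := by
  rw [← one_mul ‖deriv T 0‖]
  refine mul_le_of_forall_lt_of_nonneg zero_le_one zero_le_one fun s hs hs1 c hc hcT ↦ ?_
  rcases eq_or_lt_of_le hs with rfl | hs
  · simp only [zero_mul, zero_le_one]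
  rcases eq_or_lt_of_le hc with rfl | hc
  · simp only [mul_zero, zero_le_one]
  obtain ⟨ρ, hmaps, hρ, hρs⟩ :=
    ((eventually_mapsTo_closedAnnulus hs1 hs hc hcT hT hT0).and (Ioc_mem_nhdsGT hs)).exists
  have hle : s * c * ρ ≤ 1 * ρ := by
    simpa only [one_mul, mul_assoc] using
      mul_le_of_mapsTo_closedAnnulus hρ hρs hs1 (mul_pos hc hρ) hT hT0 hne hmaps
  exact le_of_mul_le_mul_right hle hρ

end BieberbachEilenberg

section Koebe

variable {f q : ℂ → ℂ} {w z : ℂ}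

lemma differentiableOn_of_sq_eq {U : Set ℂ} (hU : IsOpen U) (hq : ContinuousOn q U)
    (hf : DifferentiableOn ℂ f U) (hne : ∀ z ∈ U, f z ≠ 0) (hqf : ∀ z, q z ^ 2 = f z) :
    DifferentiableOn ℂ q U := fun a ha ↦ by
  have hqa : ContinuousAt q a := hq.continuousAt (hU.mem_nhds ha)
  have hsum : ∀ z ∈ {z | q z + q a ≠ 0}, slope f a z * (q z + q a)⁻¹ = slope q a z := by
    intro z hz
    rw [slope_def_field, slope_def_field, ← hqf, ← hqf, sq_sub_sq]
    field [show q z + q a ≠ 0 from hz]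
  have hqa0 : q a + q a ≠ 0 := by
    rw [← two_mul]
    exact mul_ne_zero two_ne_zero (ne_zero_pow two_ne_zero (hqf a ▸ hne a ha))
  have hlim : Tendsto (slope q a) (𝓝[≠] a) (𝓝 (deriv f a * (q a + q a)⁻¹)) := by
    have hslope := hasDerivAt_iff_tendsto_slope.1 (hf.hasDerivAt (hU.mem_nhds ha))
    have hqsum : Tendsto (fun z ↦ q z + q a) (𝓝 a) (𝓝 (q a + q a)) := hqa.add_const (q a)
    refine (hslope.mul ((hqsum.inv₀ hqa0).mono_left nhdsWithin_le_nhds)).congr' ?_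
    exact nhdsWithin_le_nhds ((hqsum.eventually_ne hqa0).mono hsum)
  exact (hasDerivAt_iff_tendsto_slope.2 hlim).differentiableAt.differentiableWithinAt

lemma norm_deriv_zero_le_two_mul_of_add_ne_zero (hq : UnivalentOn q (ball 0 1))
    (hne : ∀ z ∈ ball (0 : ℂ) 1, ∀ w ∈ ball (0 : ℂ) 1, q z + q w ≠ 0) :
    ‖deriv q 0‖ ≤ 2 * ‖q 0‖ := by
  have h0 : (0 : ℂ) ∈ ball (0 : ℂ) 1 := mem_ball_self one_pos
  have hq0 : q 0 ≠ 0 := fun h ↦ hne 0 h0 0 h0 (by rw [h, add_zero])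
  set T : ℂ → ℂ := fun z ↦ (q z - q 0) / (q z + q 0)
  have hT : UnivalentOn T (ball 0 1) := by
    refine ⟨(hq.differentiableOn.sub_const _).div (hq.differentiableOn.add_const _)
      fun z hz ↦ hne z hz 0 h0, fun z hz w hw h ↦ hq.injOn hz hw ?_⟩
    have hcross : q 0 * (q z - q w) = 0 := by
      linear_combination ((div_eq_div_iff (hne z hz 0 h0) (hne w hw 0 h0)).1 h) / 2
    exact sub_eq_zero.1 ((mul_eq_zero.1 hcross).resolve_left hq0)
  have hT0 : T 0 = 0 := by simp only [T, sub_self, zero_div]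
  have hTne : ∀ z ∈ ball (0 : ℂ) 1, ∀ w ∈ ball (0 : ℂ) 1, T z * T w ≠ 1 := fun z hz w hw h ↦ by
    rw [div_mul_div_comm, div_eq_one_iff_eq (mul_ne_zero (hne z hz 0 h0) (hne w hw 0 h0))] at h
    have hcross : q 0 * (q z + q w) = 0 := by linear_combination -h / 2
    exact hne z hz w hw ((mul_eq_zero.1 hcross).resolve_left hq0)
  have hT' : HasDerivAt T (deriv q 0 / (2 * q 0)) 0 := by
    have hq' := hq.hasDerivAt isOpen_ball h0
    refine ((hq'.sub_const (q 0)).fun_div (hq'.add_const (q 0)) (hne 0 h0 0 h0)).congr_deriv ?_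
    rw [← two_mul]
    field
  have hle := norm_deriv_le_one_of_mul_ne_one hT hT0 hTne
  rwa [hT'.deriv, norm_div, div_le_one (norm_pos_iff.2 (mul_ne_zero two_ne_zero hq0)), norm_mul,
    Complex.norm_ofNat] at hle

lemma norm_deriv_zero_le_four_mul_of_ne_zero (hf : UnivalentOn f (ball 0 1))
    (hne : ∀ z ∈ ball (0 : ℂ) 1, f z ≠ 0) : ‖deriv f 0‖ ≤ 4 * ‖f 0‖ := by
  have h0 : (0 : ℂ) ∈ ball (0 : ℂ) 1 := mem_ball_self one_pos
  have : ContractibleSpace (ball (0 : ℂ) 1) := (convex_ball 0 1).contractibleSpace ⟨0, h0⟩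
  have hsc : IsSimplyConnected (ball (0 : ℂ) 1) := SimplyConnectedSpace.ofContractible _
  obtain ⟨q, hqc, hqf⟩ := Complex.exists_continuousOn_pow_eq hsc isOpen_ball
    hf.differentiableOn.continuousOn (fun ⟨z, hz, hfz⟩ ↦ hne z hz hfz) two_ne_zero
  have hqd : DifferentiableOn ℂ q (ball 0 1) :=
    differentiableOn_of_sq_eq isOpen_ball hqc hf.differentiableOn hne hqf
  have hqi : InjOn q (ball 0 1) := fun z hz w hw h ↦
    hf.injOn hz hw (by rw [← hqf, ← hqf, h])
  have hsum : ∀ z ∈ ball (0 : ℂ) 1, ∀ w ∈ ball (0 : ℂ) 1, q z + q w ≠ 0 := fun z hz w hw h ↦ by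
    obtain rfl : z = w := hf.injOn hz hw (by
      rw [← hqf, ← hqf, eq_neg_of_add_eq_zero_left h, neg_sq])
    rw [← two_mul] at h
    exact hne z hz (by rw [← hqf, (mul_eq_zero.1 h).resolve_left two_ne_zero, zero_pow two_ne_zero])
  have hf' : deriv f 0 = 2 * q 0 * deriv q 0 := by
    rw [← funext hqf]
    simpa using ((hqd.hasDerivAt (isOpen_ball.mem_nhds h0)).fun_pow 2).deriv
  calc ‖deriv f 0‖ = 2 * ‖q 0‖ * ‖deriv q 0‖ := by
        rw [hf', norm_mul, norm_mul, Complex.norm_ofNat]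
    _ ≤ 2 * ‖q 0‖ * (2 * ‖q 0‖) := by
        gcongr
        exact norm_deriv_zero_le_two_mul_of_add_ne_zero ⟨hqd, hqi⟩ hsum
    _ = 4 * ‖f 0‖ := by rw [← hqf, norm_pow]; ring

/-- The holomorphic automorphism of the unit disk which sends `0` to `w`, for `‖w‖ < 1`. -/
noncomputable def diskAutomorphism (w z : ℂ) : ℂ := (z + w) / (1 + starRingEnd ℂ w * z)

lemma sq_norm_one_add_conj_mul_sub (w z : ℂ) :
    ‖1 + starRingEnd ℂ w * z‖ ^ 2 - ‖z + w‖ ^ 2 = (1 - ‖z‖ ^ 2) * (1 - ‖w‖ ^ 2) := by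
  simp only [Complex.sq_norm, Complex.normSq_apply, Complex.add_re, Complex.add_im, Complex.mul_re,
    Complex.mul_im, Complex.conj_re, Complex.conj_im, Complex.one_re, Complex.one_im]
  ring

lemma norm_add_lt_norm_one_add_conj_mul (hw : ‖w‖ < 1) (hz : ‖z‖ < 1) :
    ‖z + w‖ < ‖1 + starRingEnd ℂ w * z‖ := by
  refine lt_of_pow_lt_pow_left₀ 2 (norm_nonneg _) (sub_pos.1 ?_)
  rw [sq_norm_one_add_conj_mul_sub]
  exact mul_pos (sub_pos.2 (pow_lt_one₀ (norm_nonneg z) hz two_ne_zero))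
    (sub_pos.2 (pow_lt_one₀ (norm_nonneg w) hw two_ne_zero))

lemma one_add_conj_mul_ne_zero (hw : ‖w‖ < 1) (hz : ‖z‖ < 1) : 1 + starRingEnd ℂ w * z ≠ 0 :=
  norm_pos_iff.1 ((norm_nonneg _).trans_lt (norm_add_lt_norm_one_add_conj_mul hw hz))

lemma mapsTo_diskAutomorphism (hw : ‖w‖ < 1) :
    MapsTo (diskAutomorphism w) (ball 0 1) (ball 0 1) := fun z hz ↦ by
  rw [mem_ball_zero_iff] at hz ⊢
  rw [diskAutomorphism, norm_div, div_lt_one (norm_pos_iff.2 (one_add_conj_mul_ne_zero hw hz))]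
  exact norm_add_lt_norm_one_add_conj_mul hw hz

lemma hasDerivAt_diskAutomorphism (hw : ‖w‖ < 1) (hz : ‖z‖ < 1) :
    HasDerivAt (diskAutomorphism w)
      (((1 - ‖w‖ ^ 2 : ℝ) : ℂ) / (1 + starRingEnd ℂ w * z) ^ 2) z := by
  have hnum : HasDerivAt (fun z ↦ z + w) 1 z := (hasDerivAt_id z).add_const w
  have hden : HasDerivAt (fun z ↦ 1 + starRingEnd ℂ w * z) (starRingEnd ℂ w) z := by
    simpa using ((hasDerivAt_id z).const_mul (starRingEnd ℂ w)).const_add 1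
  refine (hnum.fun_div hden (one_add_conj_mul_ne_zero hw hz)).congr_deriv ?_
  push_cast
  rw [← Complex.mul_conj']
  ring

lemma univalentOn_diskAutomorphism (hw : ‖w‖ < 1) :
    UnivalentOn (diskAutomorphism w) (ball 0 1) where
  differentiableOn z hz := (hasDerivAt_diskAutomorphism hw
    (mem_ball_zero_iff.1 hz)).differentiableAt.differentiableWithinAt
  injOn z hz z' hz' h := by
    rw [mem_ball_zero_iff] at hz hz'
    have hcross : (1 - (‖w‖ : ℂ) ^ 2) * (z - z') = 0 := by
      rw [← Complex.mul_conj']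
      linear_combination (div_eq_div_iff (one_add_conj_mul_ne_zero hw hz)
        (one_add_conj_mul_ne_zero hw hz')).1 h
    have hw2 : (1 - (‖w‖ : ℂ) ^ 2) ≠ 0 :=
      mod_cast (sub_pos.2 (pow_lt_one₀ (norm_nonneg w) hw two_ne_zero)).ne'
    exact sub_eq_zero.1 ((mul_eq_zero.1 hcross).resolve_left hw2)

lemma norm_deriv_mul_one_sub_sq_le_of_ne_zero (hf : UnivalentOn f (ball 0 1))
    (hne : ∀ z ∈ ball (0 : ℂ) 1, f z ≠ 0) (hw : ‖w‖ < 1) :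
    ‖deriv f w‖ * (1 - ‖w‖ ^ 2) ≤ 4 * ‖f w‖ := by
  have hφ0 : diskAutomorphism w 0 = w := by simp [diskAutomorphism]
  have hφ : HasDerivAt (diskAutomorphism w) ((1 - ‖w‖ ^ 2 : ℝ) : ℂ) 0 := by
    refine (hasDerivAt_diskAutomorphism hw (norm_zero.trans_lt one_pos)).congr_deriv ?_
    rw [mul_zero, add_zero, one_pow, div_one]
  have hfw : HasDerivAt f (deriv f w) (diskAutomorphism w 0) := by
    rw [hφ0]
    exact hf.hasDerivAt isOpen_ball (mem_ball_zero_iff.2 hw)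
  have hkoebe := norm_deriv_zero_le_four_mul_of_ne_zero
    (hf.comp (univalentOn_diskAutomorphism hw) (mapsTo_diskAutomorphism hw))
    fun z hz ↦ hne _ (mapsTo_diskAutomorphism hw hz)
  rwa [(hfw.comp 0 hφ).deriv, comp_apply, hφ0, norm_mul, Complex.norm_of_nonneg
    (sub_nonneg.2 (pow_le_one₀ (norm_nonneg w) hw.le))] at hkoebe

end Koebe

section Growth

variable {f g : ℂ → ℂ} {w : ℂ} {r t : ℝ}

lemma hasDerivAt_one_add_mul_div_one_sub_mul (ht : 1 - t * r ≠ 0) :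
    HasDerivAt (fun t ↦ (1 + t * r) / (1 - t * r)) (2 * r / (1 - t * r) ^ 2) t := by
  have hmul : HasDerivAt (fun t ↦ t * r) r t := hasDerivAt_mul_const r
  refine ((hmul.const_add 1).fun_div (hmul.const_sub 1) ht).congr_deriv ?_
  ring

lemma hasDerivAt_sq_norm_mul (hf : DifferentiableAt ℂ f (t * w)) (ht : 1 - t * ‖w‖ ≠ 0) :
    HasDerivAt (fun t : ℝ ↦ ‖f (t * w)‖ ^ 2 * ((1 + t * ‖w‖) / (1 - t * ‖w‖)) ^ 4)
      (2 * ((1 + t * ‖w‖) / (1 - t * ‖w‖)) ^ 3 *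
        (inner ℝ (f (t * w)) (deriv f (t * w) * w) * ((1 + t * ‖w‖) / (1 - t * ‖w‖)) +
          4 * ‖f (t * w)‖ ^ 2 * ‖w‖ / (1 - t * ‖w‖) ^ 2)) t := by
  have hfw := hf.hasDerivAt.comp t (hasDerivAt_mul_const w).comp_ofReal
  have hpow := (hasDerivAt_one_add_mul_div_one_sub_mul ht).fun_pow 4
  refine (hfw.norm_sq.fun_mul hpow).congr_deriv ?_
  simp only [comp_apply]
  ring

lemma monotoneOn_sq_norm_mul (hf : DifferentiableOn ℂ f (ball 0 1))
    (hbound : ∀ z ∈ ball (0 : ℂ) 1, ‖deriv f z‖ * (1 - ‖z‖ ^ 2) ≤ 4 * ‖f z‖) (hw : ‖w‖ < 1) :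
    MonotoneOn (fun t : ℝ ↦ ‖f (t * w)‖ ^ 2 * ((1 + t * ‖w‖) / (1 - t * ‖w‖)) ^ 4)
      (Icc 0 1) := by
  have hnorm {t : ℝ} (ht : t ∈ Icc (0 : ℝ) 1) : ‖t * w‖ = t * ‖w‖ := by
    rw [norm_mul, Complex.norm_of_nonneg ht.1]
  have hpos {t : ℝ} (ht : t ∈ Icc (0 : ℝ) 1) : 0 < 1 - t * ‖w‖ :=
    sub_pos.2 ((mul_le_of_le_one_left (norm_nonneg w) ht.2).trans_lt hw)
  have hball {t : ℝ} (ht : t ∈ Icc (0 : ℝ) 1) : t * w ∈ ball (0 : ℂ) 1 := by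
    rw [mem_ball_zero_iff, hnorm ht]
    exact sub_pos.1 (hpos ht)
  have hderiv {t : ℝ} (ht : t ∈ Icc (0 : ℝ) 1) := hasDerivAt_sq_norm_mul
    (hf.differentiableAt (isOpen_ball.mem_nhds (hball ht))) (hpos ht).ne'
  refine monotoneOn_of_hasDerivWithinAt_nonneg (convex_Icc 0 1)
    (fun t ht ↦ (hderiv ht).continuousAt.continuousWithinAt)
    (fun t ht ↦ (hderiv (interior_subset ht)).hasDerivWithinAt) fun t ht ↦ ?_
  replace ht : t ∈ Icc (0 : ℝ) 1 := interior_subset ht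
  have hden : 0 < 1 - t * ‖w‖ := hpos ht
  have hnum : 0 ≤ 1 + t * ‖w‖ := add_nonneg zero_le_one (mul_nonneg ht.1 (norm_nonneg w))
  refine mul_nonneg (by positivity) (neg_le_iff_add_nonneg'.1 ?_)
  have hD : ‖deriv f (t * w)‖ * ((1 + t * ‖w‖) / (1 - t * ‖w‖)) ≤
      4 * ‖f (t * w)‖ / (1 - t * ‖w‖) ^ 2 := by
    have hb := hbound _ (hball ht)
    rw [hnorm ht] at hb
    rw [← mul_div_assoc, div_le_div_iff₀ hden (by positivity)]
    nlinarith
  calc -(inner ℝ (f (t * w)) (deriv f (t * w) * w) * ((1 + t * ‖w‖) / (1 - t * ‖w‖)))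
      = -inner ℝ (f (t * w)) (deriv f (t * w) * w) * ((1 + t * ‖w‖) / (1 - t * ‖w‖)) :=
        (neg_mul _ _).symm
    _ ≤ ‖f (t * w)‖ * ‖deriv f (t * w) * w‖ * ((1 + t * ‖w‖) / (1 - t * ‖w‖)) := by
        gcongr
        exact (neg_le_abs _).trans (abs_real_inner_le_norm _ _)
    _ = ‖f (t * w)‖ * ‖w‖ * (‖deriv f (t * w)‖ * ((1 + t * ‖w‖) / (1 - t * ‖w‖))) := by
        rw [norm_mul]; ring
    _ ≤ ‖f (t * w)‖ * ‖w‖ * (4 * ‖f (t * w)‖ / (1 - t * ‖w‖) ^ 2) := by gcongr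
    _ = 4 * ‖f (t * w)‖ ^ 2 * ‖w‖ / (1 - t * ‖w‖) ^ 2 := by ring

lemma norm_apply_zero_mul_sq_le_of_ne_zero (hf : UnivalentOn f (ball 0 1))
    (hne : ∀ z ∈ ball (0 : ℂ) 1, f z ≠ 0) (hw : ‖w‖ < 1) :
    ‖f 0‖ * ((1 - ‖w‖) / (1 + ‖w‖)) ^ 2 ≤ ‖f w‖ := by
  have hmono := monotoneOn_sq_norm_mul hf.differentiableOn
    (fun z hz ↦ norm_deriv_mul_one_sub_sq_le_of_ne_zero hf hne (mem_ball_zero_iff.1 hz)) hw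
    (left_mem_Icc.2 zero_le_one) (right_mem_Icc.2 zero_le_one) zero_le_one
  have hden : 0 < 1 - ‖w‖ := sub_pos.2 hw
  have hle : ‖f 0‖ ≤ ‖f w‖ * ((1 + ‖w‖) / (1 - ‖w‖)) ^ 2 := by
    refine le_of_sq_le_sq ?_ (by positivity)
    simpa [mul_pow, ← pow_mul] using hmono
  rwa [← inv_div, inv_pow, ← div_eq_mul_inv, div_le_iff₀ (by positivity)]

lemma norm_deriv_zero_mul_one_sub_sq_le_of_ne_zero (hf : UnivalentOn f (ball 0 1))
    (hne : ∀ z ∈ ball (0 : ℂ) 1, f z ≠ 0) (hw : ‖w‖ < 1) :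
    ‖deriv f 0‖ * (1 - ‖w‖) ^ 2 ≤ 16 * ‖f w‖ := by
  have hden : 0 < 1 - ‖w‖ := sub_pos.2 hw
  calc ‖deriv f 0‖ * (1 - ‖w‖) ^ 2
      ≤ 4 * ‖f 0‖ * (2 * ((1 - ‖w‖) / (1 + ‖w‖))) ^ 2 := by
        gcongr
        · exact norm_deriv_zero_le_four_mul_of_ne_zero hf hne
        · rw [← mul_div_assoc, le_div_iff₀ (by positivity)]
          nlinarith
    _ = 16 * (‖f 0‖ * ((1 - ‖w‖) / (1 + ‖w‖)) ^ 2) := by ring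
    _ ≤ 16 * ‖f w‖ := by
        gcongr
        exact norm_apply_zero_mul_sq_le_of_ne_zero hf hne hw

theorem norm_deriv_zero_mul_one_sub_sq_le_infDist_frontier (hg : UnivalentOn g (ball 0 1))
    (hw : ‖w‖ < 1) :
    ‖deriv g 0‖ * (1 - ‖w‖) ^ 2 ≤ 16 * infDist (g w) (frontier (g '' ball 0 1)) := by
  have hne : (frontier (g '' ball 0 1)).Nonempty :=
    hg.nonempty_frontier_image isOpen_ball isBounded_ball (nonempty_ball.2 one_pos)
  rw [← div_le_iff₀' (by norm_num), le_infDist hne]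
  intro p hp
  have hp' : p ∉ g '' ball 0 1 :=
    disjoint_left.1 (disjoint_frontier_iff_isOpen.2 (hg.isOpen_image isOpen_ball)) hp
  rw [div_le_iff₀' (by norm_num), dist_eq_norm]
  simpa only [deriv_sub_const] using norm_deriv_zero_mul_one_sub_sq_le_of_ne_zero (hg.sub_const p)
    (fun z hz h ↦ hp' ⟨z, hz, sub_eq_zero.1 h⟩) hw

end Growth

section Subordination

variable {g h : ℂ → ℂ} {s ε : ℝ}

lemma subset_of_disjoint_frontier {X : Type*} [TopologicalSpace X] {s V : Set X}
    (hs : IsPreconnected s) (hV : IsOpen V) (hsV : (s ∩ V).Nonempty)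
    (hd : Disjoint s (frontier V)) : s ⊆ V :=
  hs.subset_of_closure_inter_subset hV hsV fun z hz ↦ by
    by_contra hzV
    exact disjoint_left.1 hd hz.2 (hV.frontier_eq ▸ ⟨hz.1, hzV⟩)

lemma mul_norm_deriv_le_of_mapsTo_image (hg : DifferentiableOn ℂ g (ball 0 s))
    (hh : UnivalentOn h (ball 0 1)) (h0 : g 0 = h 0) (hs : 0 < s)
    (hmaps : MapsTo g (ball 0 s) (h '' ball 0 1)) : s * ‖deriv g 0‖ ≤ ‖deriv h 0‖ := by
  have h0s : (0 : ℂ) ∈ ball (0 : ℂ) s := mem_ball_self hs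
  have h01 : (0 : ℂ) ∈ ball (0 : ℂ) 1 := mem_ball_self one_pos
  have hinv : LeftInvOn (invFunOn h (ball 0 1)) h (ball 0 1) := hh.injOn.leftInvOn_invFunOn
  set φ : ℂ → ℂ := invFunOn h (ball 0 1) ∘ g
  have hφ : DifferentiableOn ℂ φ (ball 0 s) :=
    (hh.differentiableOn_leftInvOn isOpen_ball hinv).comp hg hmaps
  have hφ0 : φ 0 = 0 := (congrArg _ h0).trans (hinv h01)
  have hφmaps : MapsTo φ (ball 0 s) (closedBall (φ 0) 1) := fun z hz ↦ by
    rw [hφ0]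
    exact ball_subset_closedBall (invFunOn_mem (hmaps hz))
  have hchain : deriv g 0 = deriv h 0 * deriv φ 0 := by
    have hhφ : HasDerivAt h (deriv h 0) (φ 0) := by
      rw [hφ0]
      exact hh.hasDerivAt isOpen_ball h01
    refine ((hhφ.comp 0 (hφ.hasDerivAt (isOpen_ball.mem_nhds h0s))).congr_of_eventuallyEq ?_).deriv
    filter_upwards [isOpen_ball.mem_nhds h0s] with z hz
    exact (invFunOn_eq (hmaps hz)).symm
  have hschwarz : ‖deriv φ 0‖ ≤ 1 / s :=
    Complex.norm_deriv_le_div_of_mapsTo_ball hφ hφmaps hs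
  rw [le_div_iff₀' hs] at hschwarz
  calc s * ‖deriv g 0‖ = ‖deriv h 0‖ * (s * ‖deriv φ 0‖) := by
        rw [hchain, norm_mul, mul_left_comm]
    _ ≤ ‖deriv h 0‖ := mul_le_of_le_one_right (norm_nonneg _) hschwarz

lemma mapsTo_image_of_infDist_frontier_lt (hg : UnivalentOn g (ball 0 1))
    (hh : UnivalentOn h (ball 0 1)) (h0 : g 0 = h 0) (hs : 0 < s) (hs1 : s ≤ 1)
    (hε : 16 * ε ≤ ‖deriv g 0‖ * (1 - s) ^ 2)
    (hfr : ∀ z ∈ frontier (h '' ball 0 1), infDist z (frontier (g '' ball 0 1)) < ε) :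
    MapsTo g (ball 0 s) (h '' ball 0 1) := by
  have hball : ball (0 : ℂ) s ⊆ ball 0 1 := ball_subset_ball hs1
  refine mapsTo_iff_image_subset.2 (subset_of_disjoint_frontier
    ((convex_ball 0 s).isPreconnected.image g (hg.differentiableOn.continuousOn.mono hball))
    (hh.isOpen_image isOpen_ball)
    ⟨g 0, mem_image_of_mem g (mem_ball_self hs), h0 ▸ mem_image_of_mem h (mem_ball_self one_pos)⟩
    (disjoint_left.2 (forall_mem_image.2 fun w hw hwfr ↦ ?_)))
  rw [mem_ball_zero_iff] at hw
  have hdist : 16 * ε ≤ 16 * infDist (g w) (frontier (g '' ball 0 1)) :=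
    calc 16 * ε ≤ ‖deriv g 0‖ * (1 - s) ^ 2 := hε
      _ ≤ ‖deriv g 0‖ * (1 - ‖w‖) ^ 2 := by gcongr
      _ ≤ 16 * infDist (g w) (frontier (g '' ball 0 1)) :=
        norm_deriv_zero_mul_one_sub_sq_le_infDist_frontier hg (hw.trans_le hs1)
  linarith [hfr (g w) hwfr]

theorem conformal_radius_variation_general (hg : UnivalentOn g (ball 0 1))
    (hh : UnivalentOn h (ball 0 1)) (h0 : g 0 = h 0)
    (hfr : ∀ z ∈ frontier (h '' ball 0 1), infDist z (frontier (g '' ball 0 1)) < ε) :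
    ‖deriv g 0‖ - ‖deriv h 0‖ ≤ 4 * Real.sqrt ‖deriv g 0‖ * Real.sqrt ε := by
  have hε : 0 ≤ ε := by
    obtain ⟨z, hz⟩ := hh.nonempty_frontier_image isOpen_ball isBounded_ball
      (nonempty_ball.2 one_pos)
    exact infDist_nonneg.trans (hfr z hz).le
  have hg' : 0 < ‖deriv g 0‖ :=
    norm_pos_iff.2 (hg.deriv_ne_zero isOpen_ball (mem_ball_self one_pos))
  have hx : 0 < √‖deriv g 0‖ := Real.sqrt_pos.2 hg'
  have hx2 : √‖deriv g 0‖ ^ 2 = ‖deriv g 0‖ := Real.sq_sqrt hg'.le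
  -- For this radius the bound `‖deriv g 0‖ * (1 - s) ^ 2 / 16` on the distance from `g '' ball 0 s`
  -- to the frontier is exactly `ε`.
  set s := 1 - 4 * √ε / √‖deriv g 0‖ with hs_def
  suffices s * ‖deriv g 0‖ ≤ ‖deriv h 0‖ by
    have hrs : s * ‖deriv g 0‖ = ‖deriv g 0‖ - 4 * √‖deriv g 0‖ * √ε := by
      rw [hs_def, ← hx2, Real.sqrt_sq hx.le]
      field
    linarith
  rcases le_or_gt s 0 with hs | hs
  · exact (mul_nonpos_of_nonpos_of_nonneg hs hg'.le).trans (norm_nonneg _)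
  have hs1 : s ≤ 1 := sub_le_self 1 (by positivity)
  have hεs : ‖deriv g 0‖ * (1 - s) ^ 2 = 16 * ε := by
    rw [hs_def, sub_sub_cancel, div_pow, mul_pow, hx2, Real.sq_sqrt hε]
    field
  exact mul_norm_deriv_le_of_mapsTo_image (hg.differentiableOn.mono (ball_subset_ball hs1)) hh h0
    hs (mapsTo_image_of_infDist_frontier_lt hg hh h0 hs hs1 hεs.ge hfr)

end Subordination

end

/-- if `V ⊆ U` are bounded simply connected domains containing
`0` and every point of `∂V` is within `ε` of `∂U`, then the conformal radii
satisfy `r(U,0) - r(V,0) ≤ 4·√r(U,0)·√ε`. -/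
theorem conformal_radius_variation
    (U V : Set ℂ)
    (hUbd : Bornology.IsBounded U) (hUopen : IsOpen U) (hUconn : IsConnected U)
    (hUsc : SimplyConnectedSpace U) (hU0 : (0 : ℂ) ∈ U)
    (hVU : V ⊆ U) (hVopen : IsOpen V) (hVconn : IsConnected V)
    (hVsc : SimplyConnectedSpace V) (hV0 : (0 : ℂ) ∈ V)
    (g h : ℂ → ℂ)
    (hgdiff : DifferentiableOn ℂ g (ball (0 : ℂ) 1))
    (hgbij : Set.BijOn g (ball (0 : ℂ) 1) U) (hg0 : g 0 = 0)
    (hhdiff : DifferentiableOn ℂ h (ball (0 : ℂ) 1))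
    (hhbij : Set.BijOn h (ball (0 : ℂ) 1) V) (hh0 : h 0 = 0)
    (ε : ℝ) (hε : 0 < ε)
    (hfr : ∀ z ∈ frontier V, infDist z (frontier U) < ε) :
    ‖deriv g 0‖ - ‖deriv h 0‖ ≤
      4 * Real.sqrt ‖deriv g 0‖ * Real.sqrt ε := by
  refine conformal_radius_variation_general ⟨hgdiff, hgbij.injOn⟩ ⟨hhdiff, hhbij.injOn⟩
    (hg0.trans hh0.symm) ?_
  rwa [hgbij.image_eq, hhbij.image_eq]
end
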